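/- arXiv:2004.14763 — 2 statements merged into one kernel-verified Lean document; each statement's English description precedes it below -/
import Mathlib

section
/- Let p be a prime and let μ be the Haar measure on ℚ_p normalized so that μ(ℤ_p) = 1, with μ³ the product measure on ℚ_p³. For (x,y,z) ∈ ℚ_p³ set H(x,y,z) = max(1, |x|_p, |y|_p, |z|_p), and for an integer m ≥ 1 let δ_m(x,y,z) = 1 if H(x,y,z) = 1 or H(x,y,z) ≥ p^m, and δ_m(x,y,z) = 0 otherwise. Then for every complex number s with Re(s) > 3, ∫_{ℚ_p³} H(x,y,z)^{−s} · δ_m(x,y,z) dμ³ = 1 + (1 − p^{−3}) · p^{−m(s−3)} / (1 − p^{−(s−3)}). -/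
open MeasureTheory

/-!
The integrand is a function of the height `H v = max 1 ‖v‖` for the sup norm on `ℚ_p³`, and `H`
takes values in `{p ^ n : n ∈ ℕ}`, so the integral is a series over the shells `H = p ^ n`.

Multiplication by `p ^ (-n)` carries `ℤ_p` onto the ball of radius `p ^ n` in `ℚ_p` and the
subgroup `p ^ n ℤ_p`, of index `p ^ n`, onto the unit ball, so the ball of radius `p ^ n` has
measure `p ^ n`. A ball in `ℚ_p³` is a product of three such balls; hence the set `H ≤ p ^ n` has
measure `p ^ (3 n)`, and the shell `H = p ^ n` with `n ≥ 1` has measure `(1 - p ^ (-3)) p ^ (3 n)`.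
On the shells with `n ≥ m` the series is geometric with ratio `p ^ (-(s - 3))`. Only the growth
`p ^ (d n)` of the measure of the balls matters, for whatever dimension `d`.
-/

namespace PadicHeight

open Metric Set
open scoped ENNReal

section Series

lemma hasSum_ite_le_geometric {K : Type*} [NormedField K] {r : K} (hr : ‖r‖ < 1) (c : K) (m : ℕ) :
    HasSum (fun n ↦ if m ≤ n then c * r ^ n else 0) (c * r ^ m / (1 - r)) := by
  have tail_support : ∀ n ∉ range (· + m), (if m ≤ n then c * r ^ n else 0) = 0 := fun n hn ↦
    if_neg fun hmn ↦ hn ⟨n - m, Nat.sub_add_cancel hmn⟩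
  rw [← (add_left_injective m).hasSum_iff tail_support]
  simpa [Function.comp_def, pow_add, mul_assoc, mul_comm, mul_left_comm, div_eq_mul_inv] using
    (hasSum_geometric_of_norm_lt_one hr).mul_left (c * r ^ m)

lemma norm_natCast_cpow_neg_lt_one {q : ℕ} (hq : 1 < q) {t : ℂ} (ht : 0 < t.re) :
    ‖(q : ℂ) ^ (-t)‖ < 1 := by
  rw [Complex.norm_natCast_cpow_of_pos (by lia)]
  exact Real.rpow_lt_one_of_one_lt_of_neg (mod_cast hq) (by simpa using ht)

lemma natCast_pow_succ_sub_pow_mul_cpow {q : ℕ} (hq : q ≠ 0) (d n : ℕ) (s : ℂ) :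
    ((q : ℂ) ^ (d * (n + 1)) - (q : ℂ) ^ (d * n)) * ((q : ℂ) ^ (n + 1)) ^ (-s) =
      (1 - (q : ℂ) ^ (-(d : ℂ))) * ((q : ℂ) ^ (-(s - d))) ^ (n + 1) := by
  have hqC : (q : ℂ) ≠ 0 := mod_cast hq
  have ratio_eq : (q : ℂ) ^ (-(s - d)) = (q : ℂ) ^ (-s) * (q : ℂ) ^ d := by
    rw [neg_sub', sub_neg_eq_add, Complex.cpow_add _ _ hqC, Complex.cpow_natCast]
  have pow_cpow : ((q : ℂ) ^ (n + 1)) ^ (-s) = ((q : ℂ) ^ (-s)) ^ (n + 1) := by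
    rw [← Complex.natCast_cpow_natCast_mul, ← Complex.cpow_nat_mul]
  rw [ratio_eq, pow_cpow, Complex.cpow_neg _ (d : ℂ), Complex.cpow_natCast]
  field_simp
  ring

end Series

section Level

variable {α : Type*} [MeasurableSpace α] {ν : Measure α}

lemma hasSum_integral_comp_of_countable {ι E : Type*} [Countable ι] [MeasurableSpace ι]
    [MeasurableSingletonClass ι] [NormedAddCommGroup E] [NormedSpace ℝ E] [CompleteSpace E]
    {N : α → ι} (hN : Measurable N) (hfin : ∀ i, ν (N ⁻¹' {i}) ≠ ∞) {f : ι → E}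
    (hf : Summable fun i ↦ ν.real (N ⁻¹' {i}) * ‖f i‖) :
    HasSum (fun i ↦ ν.real (N ⁻¹' {i}) • f i) (∫ a, f (N a) ∂ν) := by
  have integrable_f := integrable_sum_dirac (x := id) hfin hf
  have hsum := hasSum_integral_sum_dirac (x := id) hfin hf
  simp only [id, ← Measure.map_eq_sum ν N hN] at integrable_f hsum
  rwa [integral_map hN.aemeasurable integrable_f.aestronglyMeasurable] at hsum

lemma measureReal_preimage_succ {N : α → ℕ} (hN : Measurable N) (n : ℕ)
    (hfin : ν (N ⁻¹' Iic (n + 1)) ≠ ∞) :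
    ν.real (N ⁻¹' {n + 1}) = ν.real (N ⁻¹' Iic (n + 1)) - ν.real (N ⁻¹' Iic n) := by
  have preimage_eq : N ⁻¹' {n + 1} = N ⁻¹' Iic (n + 1) \ N ⁻¹' Iic n := by
    ext a
    simp only [mem_preimage, mem_singleton_iff, mem_sdiff, mem_Iic]
    lia
  rw [preimage_eq, measureReal_sdiff (preimage_mono (Iic_subset_Iic.2 n.le_succ))
    (hN measurableSet_Iic) hfin]

end Level

/-- The balls of `E` centred at `0` grow like those of a `d`-dimensional vector space over a local
field with residue field of cardinality `q`: every height `max 1 ‖v‖` is a power of `q`, and the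
ball of radius `q ^ n` has measure `q ^ (d * n)`. Only the balls of radius at least `1` are
constrained, since the height does not see the others. -/
structure HasPowerBallGrowth {E : Type*} [SeminormedAddCommGroup E] [MeasurableSpace E]
    (q d : ℕ) (ν : Measure E) : Prop where
  one_lt : 1 < q
  exists_max_one_norm_eq_pow : ∀ v : E, ∃ n : ℕ, max 1 ‖v‖ = (q : ℝ) ^ n
  measure_closedBall : ∀ n : ℕ, ν (closedBall 0 ((q : ℝ) ^ n)) = (q : ℝ≥0∞) ^ (d * n)

namespace HasPowerBallGrowth

variable {E F : Type*} [SeminormedAddCommGroup E] [MeasurableSpace E]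
  [SeminormedAddCommGroup F] [MeasurableSpace F] {q d e : ℕ} {ν : Measure E} {ξ : Measure F}

lemma prod [SFinite ξ] (hν : HasPowerBallGrowth q d ν) (hξ : HasPowerBallGrowth q e ξ) :
    HasPowerBallGrowth q (d + e) (ν.prod ξ) where
  one_lt := hν.one_lt
  exists_max_one_norm_eq_pow v := by
    have height_eq_max : max 1 ‖v‖ = max (max 1 ‖v.1‖) (max 1 ‖v.2‖) :=
      sup_sup_distrib_left _ _ _
    rcases max_choice (max 1 ‖v.1‖) (max 1 ‖v.2‖) with hmax | hmax <;> rw [height_eq_max, hmax]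
    exacts [hν.exists_max_one_norm_eq_pow v.1, hξ.exists_max_one_norm_eq_pow v.2]
  measure_closedBall n := by
    rw [← Prod.mk_zero_zero, ← closedBall_prod_same, Measure.prod_prod, hν.measure_closedBall,
      hξ.measure_closedBall, add_mul, pow_add]

/-- The exponent `n` of the height `max 1 ‖v‖ = q ^ n`, as a function of `v`; the shells of the
height are its fibres. -/
noncomputable def exponent (h : HasPowerBallGrowth q d ν) (v : E) : ℕ :=
  (h.exists_max_one_norm_eq_pow v).choose

lemma max_one_norm_eq_pow_exponent (h : HasPowerBallGrowth q d ν) (v : E) :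
    max 1 ‖v‖ = (q : ℝ) ^ h.exponent v :=
  (h.exists_max_one_norm_eq_pow v).choose_spec

lemma max_one_norm_cpow_mul_ite (h : HasPowerBallGrowth q d ν) (m : ℕ) (s : ℂ) (v : E) :
    (((max 1 ‖v‖ : ℝ) : ℂ) ^ (-s) *
        if max 1 ‖v‖ = 1 ∨ (q : ℝ) ^ m ≤ max 1 ‖v‖ then 1 else 0) =
      ((q : ℂ) ^ h.exponent v) ^ (-s) *
        if h.exponent v = 0 ∨ m ≤ h.exponent v then 1 else 0 := by
  have hq : (1 : ℝ) < q := mod_cast h.one_lt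
  have pow_eq_one : (q : ℝ) ^ h.exponent v = 1 ↔ h.exponent v = 0 := by
    rw [← pow_zero (q : ℝ), pow_right_inj₀ (zero_lt_one.trans hq) hq.ne']
  simp only [h.max_one_norm_eq_pow_exponent, pow_le_pow_iff_right₀ hq, pow_eq_one,
    Complex.ofReal_pow, Complex.ofReal_natCast]

lemma preimage_exponent_Iic (h : HasPowerBallGrowth q d ν) (n : ℕ) :
    h.exponent ⁻¹' Iic n = closedBall 0 ((q : ℝ) ^ n) := by
  have hq : (1 : ℝ) < q := mod_cast h.one_lt
  ext v
  rw [mem_preimage, mem_Iic, mem_closedBall_zero_iff, ← pow_le_pow_iff_right₀ hq,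
    ← h.max_one_norm_eq_pow_exponent, max_le_iff, and_iff_right (one_le_pow₀ hq.le)]

lemma measure_preimage_exponent_Iic (h : HasPowerBallGrowth q d ν) (n : ℕ) :
    ν (h.exponent ⁻¹' Iic n) = (q : ℝ≥0∞) ^ (d * n) := by
  rw [h.preimage_exponent_Iic, h.measure_closedBall]

lemma measure_preimage_exponent_Iic_ne_top (h : HasPowerBallGrowth q d ν) (n : ℕ) :
    ν (h.exponent ⁻¹' Iic n) ≠ ∞ := by
  rw [h.measure_preimage_exponent_Iic]
  exact ENNReal.pow_ne_top (ENNReal.natCast_ne_top q)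

lemma measure_preimage_exponent_singleton_ne_top (h : HasPowerBallGrowth q d ν) (n : ℕ) :
    ν (h.exponent ⁻¹' {n}) ≠ ∞ :=
  measure_ne_top_of_subset (preimage_mono (singleton_subset_iff.2 self_mem_Iic))
    (h.measure_preimage_exponent_Iic_ne_top n)

lemma measureReal_preimage_exponent_zero (h : HasPowerBallGrowth q d ν) :
    ν.real (h.exponent ⁻¹' {0}) = 1 := by
  have Iic_zero : Iic (0 : ℕ) = {0} := Iic_bot
  rw [← Iic_zero, Measure.real, h.measure_preimage_exponent_Iic]
  simp

variable [OpensMeasurableSpace E]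

lemma measurable_exponent (h : HasPowerBallGrowth q d ν) : Measurable h.exponent :=
  measurable_of_Iic fun n ↦ by
    rw [h.preimage_exponent_Iic]
    exact measurableSet_closedBall

lemma measureReal_preimage_exponent_succ (h : HasPowerBallGrowth q d ν) (n : ℕ) :
    ν.real (h.exponent ⁻¹' {n + 1}) = (q : ℝ) ^ (d * (n + 1)) - (q : ℝ) ^ (d * n) := by
  rw [measureReal_preimage_succ h.measurable_exponent n (h.measure_preimage_exponent_Iic_ne_top _)]
  simp [Measure.real, h.measure_preimage_exponent_Iic]

lemma measureReal_preimage_exponent_smul (h : HasPowerBallGrowth q d ν) {m : ℕ} (hm : 1 ≤ m)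
    (s : ℂ) (n : ℕ) :
    ν.real (h.exponent ⁻¹' {n}) •
        (((q : ℂ) ^ n) ^ (-s) * if n = 0 ∨ m ≤ n then 1 else 0) =
      (if n = 0 then 1 else 0) +
        if m ≤ n then (1 - (q : ℂ) ^ (-(d : ℂ))) * ((q : ℂ) ^ (-(s - d))) ^ n else 0 := by
  rw [Complex.real_smul]
  rcases n with _ | n
  · simp [h.measureReal_preimage_exponent_zero, Nat.ne_of_gt hm]
  · by_cases hmn : m ≤ n + 1
    · simpa [h.measureReal_preimage_exponent_succ, hmn] using
        natCast_pow_succ_sub_pow_mul_cpow (Nat.ne_zero_of_lt h.one_lt) d n s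
    · simp [hmn]

end HasPowerBallGrowth

section Padic

variable {p : ℕ} [Fact p.Prime]

lemma exists_max_one_norm_eq_pow (x : ℚ_[p]) : ∃ n : ℕ, max 1 ‖x‖ = (p : ℝ) ^ n := by
  by_cases hx : ‖x‖ ≤ 1
  · exact ⟨0, by simpa using hx⟩
  · have hx0 : x ≠ 0 := by
      rintro rfl
      simp at hx
    have valuation_neg : x.valuation < 0 := by
      simpa [Padic.norm_le_one_iff_val_nonneg] using hx
    obtain ⟨n, hn⟩ := Int.eq_ofNat_of_zero_le (neg_nonneg.2 valuation_neg.le)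
    exact ⟨n, by rw [max_eq_right (not_le.1 hx).le, Padic.norm_eq_zpow_neg_valuation hx0, hn,
      zpow_natCast]⟩

/-- The embedding `y ↦ p ^ (-n) * y` of `ℤ_p` into `ℚ_p`, whose image is the ball of radius
`p ^ n`. -/
noncomputable def invPowHom (p : ℕ) [Fact p.Prime] (n : ℕ) : ℤ_[p] →+ ℚ_[p] :=
  (AddMonoidHom.mulLeft ((p : ℚ_[p]) ^ n)⁻¹).comp PadicInt.Coe.ringHom.toAddMonoidHom

lemma invPowHom_apply (n : ℕ) (y : ℤ_[p]) : invPowHom p n y = ((p : ℚ_[p]) ^ n)⁻¹ * y := rfl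

lemma norm_invPowHom (n : ℕ) (y : ℤ_[p]) : ‖invPowHom p n y‖ = (p : ℝ) ^ n * ‖y‖ := by
  rw [invPowHom_apply, norm_mul, norm_inv, norm_pow, Padic.norm_p, inv_pow, inv_inv,
    PadicInt.norm_def]

lemma isOpenEmbedding_invPowHom (n : ℕ) : Topology.IsOpenEmbedding (invPowHom p n) :=
  (Homeomorph.mulLeft₀ ((p : ℚ_[p]) ^ n)⁻¹
    (by simp [(Fact.out : p.Prime).ne_zero])).isOpenEmbedding.comp PadicInt.isOpenEmbedding_coe

lemma range_invPowHom (n : ℕ) : range (invPowHom p n) = closedBall 0 ((p : ℝ) ^ n) := by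
  have hp : (p : ℚ_[p]) ≠ 0 := mod_cast (Fact.out : p.Prime).ne_zero
  have hpn : 0 < (p : ℝ) ^ n := pow_pos (mod_cast (Fact.out : p.Prime).pos) n
  ext x
  rw [mem_closedBall_zero_iff]
  constructor
  · rintro ⟨y, rfl⟩
    rw [norm_invPowHom]
    exact mul_le_of_le_one_right hpn.le y.norm_le_one
  · intro hx
    have norm_le_one : ‖(p : ℚ_[p]) ^ n * x‖ ≤ 1 := by
      rw [norm_mul, norm_pow, Padic.norm_p, inv_pow]
      exact inv_mul_le_one_of_le₀ hx hpn.le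
    exact ⟨⟨_, norm_le_one⟩, inv_mul_cancel_left₀ (pow_ne_zero n hp) x⟩

lemma norm_invPowHom_le_one_iff {n : ℕ} {y : ℤ_[p]} :
    ‖invPowHom p n y‖ ≤ 1 ↔ PadicInt.toZModPow n y = 0 := by
  have hpn : 0 < (p : ℝ) ^ n := pow_pos (mod_cast (Fact.out : p.Prime).pos) n
  rw [norm_invPowHom, ← RingHom.mem_ker, PadicInt.ker_toZModPow,
    ← PadicInt.norm_le_pow_iff_mem_span_pow, zpow_neg, zpow_natCast, ← one_div,
    le_div_iff₀' hpn]

lemma image_invPowHom_ker_toZModPow (n : ℕ) :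
    invPowHom p n '' (PadicInt.toZModPow n : ℤ_[p] →+* _).toAddMonoidHom.ker =
      closedBall 0 1 := by
  have ker_eq : ((PadicInt.toZModPow n : ℤ_[p] →+* _).toAddMonoidHom.ker : Set ℤ_[p]) =
      invPowHom p n ⁻¹' closedBall 0 1 := by
    ext y
    simp [AddMonoidHom.mem_ker, norm_invPowHom_le_one_iff]
  rw [ker_eq, image_preimage_eq_inter_range, range_invPowHom, inter_eq_left]
  exact closedBall_subset_closedBall (one_le_pow₀ (mod_cast (Fact.out : p.Prime).one_lt.le))

lemma index_ker_toZModPow (n : ℕ) :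
    (PadicInt.toZModPow n : ℤ_[p] →+* ZMod (p ^ n)).toAddMonoidHom.ker.index = p ^ n := by
  rw [AddSubgroup.index_ker, AddMonoidHom.range_eq_top.2 (ZMod.ringHom_surjective _)]
  simp

variable [MeasurableSpace ℚ_[p]] [BorelSpace ℚ_[p]] (μ : Measure ℚ_[p])

lemma measure_closedBall_pow [μ.IsAddLeftInvariant] (n : ℕ) :
    μ (closedBall 0 ((p : ℝ) ^ n)) = (p : ℝ≥0∞) ^ n * μ (closedBall 0 1) := by
  borelize ℤ_[p]
  have emb : MeasurableEmbedding (invPowHom p n) :=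
    (isOpenEmbedding_invPowHom n).measurableEmbedding
  have ker_eq := image_invPowHom_ker_toZModPow (p := p) n
  have index_eq := index_ker_toZModPow (p := p) n
  set U := (PadicInt.toZModPow n : ℤ_[p] →+* ZMod (p ^ n)).toAddMonoidHom.ker
  have measurableSet_U : MeasurableSet (U : Set ℤ_[p]) := by
    rw [← emb.measurableSet_image, ker_eq]
    exact measurableSet_closedBall
  have : U.FiniteIndex := ⟨by simp [index_eq, (Fact.out : p.Prime).ne_zero]⟩
  have := Measure.IsAddLeftInvariant.comap μ emb
  have index_mul := AddSubgroup.index_mul_measure U measurableSet_U (μ.comap (invPowHom p n))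
  rw [emb.comap_apply, emb.comap_apply, image_univ, range_invPowHom, ker_eq, index_eq] at index_mul
  rw [← index_mul, Nat.cast_pow]

lemma hasPowerBallGrowth_padic [μ.IsAddLeftInvariant] (hμ : μ {x : ℚ_[p] | ‖x‖ ≤ 1} = 1) :
    HasPowerBallGrowth p 1 μ where
  one_lt := (Fact.out : p.Prime).one_lt
  exists_max_one_norm_eq_pow := exists_max_one_norm_eq_pow
  measure_closedBall n := by
    have closedBall_one : closedBall (0 : ℚ_[p]) 1 = {x | ‖x‖ ≤ 1} := by
      simp only [closedBall, dist_zero_right]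
    rw [measure_closedBall_pow, closedBall_one, hμ, mul_one, one_mul]

end Padic

end PadicHeight

theorem padic_heisenberg_height_integral_general {E : Type*} [SeminormedAddCommGroup E]
    [MeasurableSpace E] [OpensMeasurableSpace E] {q d : ℕ} {ν : Measure E}
    (hν : PadicHeight.HasPowerBallGrowth q d ν) {m : ℕ} (hm : 1 ≤ m) {s : ℂ} (hs : d < s.re) :
    ∫ v : E, ((max 1 ‖v‖ : ℝ) : ℂ) ^ (-s) *
        (if max 1 ‖v‖ = 1 ∨ (q : ℝ) ^ m ≤ max 1 ‖v‖ then 1 else 0) ∂ν =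
      1 + (1 - (q : ℂ) ^ (-(d : ℂ))) * (q : ℂ) ^ (-(m : ℂ) * (s - d)) /
        (1 - (q : ℂ) ^ (-(s - d))) := by
  have ratio_lt_one : ‖(q : ℂ) ^ (-(s - d))‖ < 1 :=
    PadicHeight.norm_natCast_cpow_neg_lt_one hν.one_lt (by simpa using hs)
  have ratio_pow : (q : ℂ) ^ (-(m : ℂ) * (s - d)) = ((q : ℂ) ^ (-(s - d))) ^ m := by
    rw [← Complex.cpow_nat_mul, mul_neg, neg_mul]
  have shell_sum := (hasSum_ite_eq 0 (1 : ℂ)).add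
    (PadicHeight.hasSum_ite_le_geometric ratio_lt_one (1 - (q : ℂ) ^ (-(d : ℂ))) m)
  simp only [← hν.measureReal_preimage_exponent_smul hm s] at shell_sum
  have integral_sum := PadicHeight.hasSum_integral_comp_of_countable hν.measurable_exponent
    hν.measure_preimage_exponent_singleton_ne_top
    (by simpa only [norm_smul, Real.norm_of_nonneg measureReal_nonneg] using
      shell_sum.summable.norm)
  simp only [hν.max_one_norm_cpow_mul_ite]
  rw [ratio_pow, integral_sum.unique shell_sum]

/-- The local height integral at a good place for the compactification `ℙ³` of the
Heisenberg group: with `μ` the Haar measure on `ℚ_p` normalized by `μ(ℤ_p) = 1`,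
`H(x,y,z) = max(1,|x|_p,|y|_p,|z|_p)` and `δ_m` the Campana indicator (`H = 1` or
`H ≥ p^m`), for `Re(s) > 3` one has
`∫_{ℚ_p³} H^{−s} δ_m dμ³ = 1 + (1 − p^{−3}) p^{−m(s−3)} / (1 − p^{−(s−3)})`. -/
theorem padic_heisenberg_height_integral (p : ℕ) [Fact p.Prime]
    [MeasurableSpace ℚ_[p]] [BorelSpace ℚ_[p]]
    (μ : Measure ℚ_[p]) [μ.IsAddHaarMeasure]
    (hμ : μ {x : ℚ_[p] | ‖x‖ ≤ 1} = 1)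
    (m : ℕ) (hm : 1 ≤ m) (s : ℂ) (hs : 3 < s.re) :
    ∫ v : ℚ_[p] × ℚ_[p] × ℚ_[p],
        (((max 1 (max ‖v.1‖ (max ‖v.2.1‖ ‖v.2.2‖)) : ℝ) : ℂ) ^ (-s)) *
          (if max 1 (max ‖v.1‖ (max ‖v.2.1‖ ‖v.2.2‖)) = 1 ∨
              (p : ℝ) ^ m ≤ max 1 (max ‖v.1‖ (max ‖v.2.1‖ ‖v.2.2‖)) then 1 else 0)
        ∂(μ.prod (μ.prod μ))
      = 1 + (1 - (p : ℂ) ^ (-(3 : ℂ))) * (p : ℂ) ^ (-(m : ℂ) * (s - 3)) /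
          (1 - (p : ℂ) ^ (-(s - 3))) := by
  have growth := PadicHeight.hasPowerBallGrowth_padic μ hμ
  exact_mod_cast padic_heisenberg_height_integral_general (growth.prod (growth.prod growth)) hm
    (mod_cast hs)
end

section
/- For every real number s > 3, the function (x, y, z) ↦ max(1, |x|, |y|, |z|)^{−s} is integrable on ℝ³ with respect to Lebesgue measure, and its integral equals 8s/(s − 3). In particular, the function s ↦ ∫_{ℝ³} max(1, |x|, |y|, |z|)^{−s} dx dy dz, defined for s > 3, has a simple pole at s = 3 (with residue 24). -/
open MeasureTheory

/-!
The height `max 1 |x| |y| |z|` is `max 1 ‖v‖` for the sup norm on `ℝ × ℝ × ℝ`, so the integrand is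
radial. In a normed space of dimension `d`, polar coordinates turn the integral into
`d * μ (ball 0 1)` times `∫₀¹ r ^ (d - 1) + ∫₁^∞ r ^ (d - 1 - s) = 1 / d + 1 / (s - d)`, which
gives `μ (ball 0 1) * s / (s - d)`. For `ℝ × ℝ × ℝ` the unit ball is a cube of volume `8`.
-/

open Set Filter Topology Module

section RadialIntegral

variable {a s : ℝ}

lemma eqOn_rpow_mul_max_one_rpow_neg_Ioc :
    EqOn (fun r : ℝ ↦ r ^ a * max 1 r ^ (-s)) (fun r ↦ r ^ a) (Ioc 0 1) := fun r hr ↦ by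
  simp [max_eq_left hr.2]

lemma eqOn_rpow_mul_max_one_rpow_neg_Ioi :
    EqOn (fun r : ℝ ↦ r ^ a * max 1 r ^ (-s)) (fun r ↦ r ^ (a - s)) (Ioi 1) := fun r hr ↦ by
  have one_lt_r : 1 < r := hr
  simp [max_eq_right one_lt_r.le, sub_eq_add_neg, Real.rpow_add (one_pos.trans one_lt_r)]

lemma integrableOn_Ioc_rpow_mul_max_one_rpow_neg (ha : -1 < a) :
    IntegrableOn (fun r : ℝ ↦ r ^ a * max 1 r ^ (-s)) (Ioc 0 1) := by
  rw [integrableOn_congr_fun eqOn_rpow_mul_max_one_rpow_neg_Ioc measurableSet_Ioc,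
    ← intervalIntegrable_iff_integrableOn_Ioc_of_le zero_le_one]
  exact intervalIntegral.intervalIntegrable_rpow' ha

lemma integrableOn_Ioi_one_rpow_mul_max_one_rpow_neg (hs : a + 1 < s) :
    IntegrableOn (fun r : ℝ ↦ r ^ a * max 1 r ^ (-s)) (Ioi 1) := by
  rw [integrableOn_congr_fun eqOn_rpow_mul_max_one_rpow_neg_Ioi measurableSet_Ioi]
  exact integrableOn_Ioi_rpow_of_lt (by linarith) one_pos

lemma integrableOn_Ioi_zero_rpow_mul_max_one_rpow_neg (ha : -1 < a) (hs : a + 1 < s) :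
    IntegrableOn (fun r : ℝ ↦ r ^ a * max 1 r ^ (-s)) (Ioi 0) := by
  rw [← Ioc_union_Ioi_eq_Ioi (zero_le_one (α := ℝ))]
  exact (integrableOn_Ioc_rpow_mul_max_one_rpow_neg ha).union
    (integrableOn_Ioi_one_rpow_mul_max_one_rpow_neg hs)

lemma integral_Ioc_rpow_mul_max_one_rpow_neg (ha : -1 < a) :
    ∫ r in Ioc (0 : ℝ) 1, r ^ a * max 1 r ^ (-s) = 1 / (a + 1) := by
  rw [setIntegral_congr_fun measurableSet_Ioc eqOn_rpow_mul_max_one_rpow_neg_Ioc,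
    ← intervalIntegral.integral_of_le zero_le_one, integral_rpow (Or.inl ha),
    Real.one_rpow, Real.zero_rpow (by linarith), sub_zero]

lemma integral_Ioi_one_rpow_mul_max_one_rpow_neg (hs : a + 1 < s) :
    ∫ r in Ioi (1 : ℝ), r ^ a * max 1 r ^ (-s) = 1 / (s - (a + 1)) := by
  rw [setIntegral_congr_fun measurableSet_Ioi eqOn_rpow_mul_max_one_rpow_neg_Ioi,
    integral_Ioi_rpow_of_lt (by linarith) one_pos, Real.one_rpow, neg_div, ← div_neg]
  congr 1
  ring

lemma integral_Ioi_zero_rpow_mul_max_one_rpow_neg (ha : -1 < a) (hs : a + 1 < s) :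
    ∫ r in Ioi (0 : ℝ), r ^ a * max 1 r ^ (-s) = 1 / (a + 1) + 1 / (s - (a + 1)) := by
  rw [← Ioc_union_Ioi_eq_Ioi (zero_le_one (α := ℝ)),
    setIntegral_union Ioc_disjoint_Ioi_same measurableSet_Ioi
      (integrableOn_Ioc_rpow_mul_max_one_rpow_neg ha)
      (integrableOn_Ioi_one_rpow_mul_max_one_rpow_neg hs),
    integral_Ioc_rpow_mul_max_one_rpow_neg ha, integral_Ioi_one_rpow_mul_max_one_rpow_neg hs]

end RadialIntegral

section NormedSpace

variable {E : Type*} [NormedAddCommGroup E] [NormedSpace ℝ E] [FiniteDimensional ℝ E]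
  [Nontrivial E] [MeasurableSpace E] [BorelSpace E] (μ : Measure E) [μ.IsAddHaarMeasure]
  {s : ℝ}

theorem integrable_max_one_norm_rpow_neg (hs : finrank ℝ E < s) :
    Integrable (fun v : E ↦ max 1 ‖v‖ ^ (-s)) μ := by
  rw [integrable_fun_norm_addHaar μ (f := fun r ↦ max 1 r ^ (-s))]
  simp only [smul_eq_mul, ← Real.rpow_natCast, Nat.cast_pred (finrank_pos (R := ℝ) (M := E))]
  have dim_pos : (0 : ℝ) < finrank ℝ E := mod_cast finrank_pos
  exact integrableOn_Ioi_zero_rpow_mul_max_one_rpow_neg (by linarith) (by linarith)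

theorem integral_max_one_norm_rpow_neg (hs : finrank ℝ E < s) :
    ∫ v : E, max 1 ‖v‖ ^ (-s) ∂μ = μ.real (Metric.ball 0 1) * s / (s - finrank ℝ E) := by
  have dim_pos : (0 : ℝ) < finrank ℝ E := mod_cast finrank_pos
  have sub_dim_ne_zero : s - finrank ℝ E ≠ 0 := (sub_pos.2 hs).ne'
  rw [integral_fun_norm_addHaar μ (fun r ↦ max 1 r ^ (-s))]
  simp only [smul_eq_mul, nsmul_eq_mul, ← Real.rpow_natCast,
    Nat.cast_pred (finrank_pos (R := ℝ) (M := E))]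
  rw [integral_Ioi_zero_rpow_mul_max_one_rpow_neg (by linarith) (by linarith), sub_add_cancel]
  field_simp
  ring

theorem tendsto_sub_finrank_mul_integral_max_one_norm_rpow_neg :
    Tendsto (fun s : ℝ ↦ (s - finrank ℝ E) * ∫ v : E, max 1 ‖v‖ ^ (-s) ∂μ)
      (𝓝[>] (finrank ℝ E : ℝ)) (𝓝 (μ.real (Metric.ball 0 1) * finrank ℝ E)) := by
  have linear_limit : Tendsto (fun s : ℝ ↦ μ.real (Metric.ball (0 : E) 1) * s)
      (𝓝[>] (finrank ℝ E : ℝ)) (𝓝 (μ.real (Metric.ball 0 1) * finrank ℝ E)) :=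
    (continuous_const_mul _).continuousWithinAt
  refine linear_limit.congr' ?_
  filter_upwards [self_mem_nhdsWithin] with s hs
  rw [integral_max_one_norm_rpow_neg μ hs, mul_div_cancel₀ _ (sub_pos.2 hs).ne']

theorem archimedean_heisenberg_height_integral_general :
    (∀ s : ℝ, finrank ℝ E < s →
      Integrable (fun v : E ↦ max 1 ‖v‖ ^ (-s)) μ ∧
      ∫ v : E, max 1 ‖v‖ ^ (-s) ∂μ = μ.real (Metric.ball 0 1) * s / (s - finrank ℝ E)) ∧
    Tendsto (fun s : ℝ ↦ (s - finrank ℝ E) * ∫ v : E, max 1 ‖v‖ ^ (-s) ∂μ)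
      (𝓝[>] (finrank ℝ E : ℝ)) (𝓝 (μ.real (Metric.ball 0 1) * finrank ℝ E)) :=
  ⟨fun _ hs ↦ ⟨integrable_max_one_norm_rpow_neg μ hs, integral_max_one_norm_rpow_neg μ hs⟩,
    tendsto_sub_finrank_mul_integral_max_one_norm_rpow_neg μ⟩

end NormedSpace

lemma measureReal_prod_ball {X Y : Type*} [PseudoMetricSpace X] [PseudoMetricSpace Y]
    [MeasurableSpace X] [MeasurableSpace Y] (μ : Measure X) (ν : Measure Y) [SFinite ν]
    (p : X × Y) (r : ℝ) :
    (μ.prod ν).real (Metric.ball p r) =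
      μ.real (Metric.ball p.1 r) * ν.real (Metric.ball p.2 r) := by
  rw [← measureReal_prod_prod, ball_prod_same]

lemma volume_real_ball_prod_prod {r : ℝ} (hr : 0 ≤ r) (v : ℝ × ℝ × ℝ) :
    volume.real (Metric.ball v r) = (2 * r) ^ 3 := by
  simp only [Measure.volume_eq_prod, measureReal_prod_ball, Real.volume_real_ball hr]
  ring

-- Instance search does not unfold `volume` on a product to `volume.prod volume`.
instance isAddHaarMeasure_volume_prod {G H : Type*}
    [AddGroup G] [TopologicalSpace G] [MeasureSpace G] [(volume : Measure G).IsAddHaarMeasure]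
    [AddGroup H] [TopologicalSpace H] [MeasureSpace H] [(volume : Measure H).IsAddHaarMeasure]
    [SFinite (volume : Measure G)] [SFinite (volume : Measure H)]
    [MeasurableAdd G] [MeasurableAdd H] :
    (volume : Measure (G × H)).IsAddHaarMeasure :=
  Measure.prod.instIsAddHaarMeasure volume volume

/-- The archimedean height integral for the compactification `ℙ³` of the Heisenberg group:
for `s > 3`, `(x,y,z) ↦ max(1,|x|,|y|,|z|)^{−s}` is Lebesgue-integrable on `ℝ³` with
integral `8s/(s−3)`; in particular `s ↦ ∫_{ℝ³} max(1,|x|,|y|,|z|)^{−s}` has a simple pole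
at `s = 3` with residue `24`. -/
theorem archimedean_heisenberg_height_integral :
    (∀ s : ℝ, 3 < s →
      Integrable (fun v : ℝ × ℝ × ℝ =>
        (max 1 (max |v.1| (max |v.2.1| |v.2.2|))) ^ (-s)) ∧
      ∫ v : ℝ × ℝ × ℝ, (max 1 (max |v.1| (max |v.2.1| |v.2.2|))) ^ (-s)
        = 8 * s / (s - 3)) ∧
    Filter.Tendsto
      (fun s : ℝ => (s - 3) *
        ∫ v : ℝ × ℝ × ℝ, (max 1 (max |v.1| (max |v.2.1| |v.2.2|))) ^ (-s))
      (nhdsWithin 3 (Set.Ioi 3)) (nhds 24) := by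
  have general := archimedean_heisenberg_height_integral_general (volume : Measure (ℝ × ℝ × ℝ))
  norm_num [Prod.norm_def, volume_real_ball_prod_prod] at general ⊢
  exact general
end
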